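/- arXiv:1503.03103 — 6 statements merged into one kernel-verified Lean document; each statement's English description precedes it below -/
import Mathlib

section
/- For every natural number n with n > 3, there do not exist rational numbers q₁ and q₂, each lying in the interval (0, 1/2], such that (1/q₁ − 1)·(1/q₂ − 1) = 2n − 2 and 2·((1 − 2q₁) + (1 − 2q₂)) = 2(2n − 4)/n. -/
/-- For every natural number `n > 3`, there do not exist rational numbers `q₁, q₂`,
each in `(0, 1/2]`, such that `(1/q₁ − 1)(1/q₂ − 1) = 2n − 2` and
`2((1 − 2q₁) + (1 − 2q₂)) = 2(2n − 4)/n`. -/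
theorem stmt0 (n : ℕ) (hn : n > 3) :
    ¬ ∃ q₁ q₂ : ℚ, (0 < q₁ ∧ q₁ ≤ 1/2) ∧ (0 < q₂ ∧ q₂ ≤ 1/2) ∧
      (1/q₁ - 1) * (1/q₂ - 1) = 2*(n : ℚ) - 2 ∧
      2*((1 - 2*q₁) + (1 - 2*q₂)) = 2*(2*(n : ℚ) - 4)/(n : ℚ) := by
  rintro ⟨a, b, ⟨ha, -⟩, ⟨hb, -⟩, h1, h2⟩
  have hN : (3 : ℚ) < n := by exact_mod_cast hn
  generalize (n : ℚ) = N at *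
  have hN0 : N ≠ 0 := by linarith
  have hs : N * (a + b) = 2 := by
    field_simp at h2
    linarith
  have hp : (1 - a) * (1 - b) = (2 * N - 2) * (a * b) := by
    rw [← h1]
    field_simp
  -- The sum and product of `a` and `b` are now determined, and the discriminant of the
  -- quadratic with roots `a` and `b` is negative: there is not even a real solution.
  have key : N ^ 2 * (2 * N - 3) * (a - b) ^ 2 = -4 * ((N - 1) * (N - 3)) := by
    linear_combination ((2 * N - 3) * (N * (a + b) + 2) + 4 * N) * hs + (4 * N ^ 2) * hp
  have hl : 0 ≤ N ^ 2 * (2 * N - 3) * (a - b) ^ 2 :=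
    mul_nonneg (mul_nonneg (sq_nonneg N) (by linarith)) (sq_nonneg _)
  have hr : 0 < (N - 1) * (N - 3) := mul_pos (by linarith) (by linarith)
  linarith
end

section
/- For every natural number n with n > 3, there do not exist nonzero real numbers q₁ and q₂ such that (1/q₁ − 1)·(1/q₂ − 1) = 2n − 2 and 2·((1 − 2q₁) + (1 − 2q₂)) = 2(2n − 4)/n. -/
/-!
The two equations determine the elementary symmetric functions of `q₁, q₂`:
`q₁ + q₂ = 2 / n` and `q₁ q₂ = (n - 2) / (n (2n - 3))`. Hence the discriminant `(q₁ - q₂)²`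
has the sign of `-(n - 1) (n - 3)`, which is negative for `n > 3`.
-/

/-- For every natural number `n > 3`, there do not exist nonzero real numbers `q₁, q₂`
such that `(1/q₁ − 1)(1/q₂ − 1) = 2n − 2` and `2((1 − 2q₁) + (1 − 2q₂)) = 2(2n − 4)/n`. -/
theorem stmt1 (n : ℕ) (hn : n > 3) :
    ¬ ∃ q₁ q₂ : ℝ, q₁ ≠ 0 ∧ q₂ ≠ 0 ∧
      (1/q₁ - 1) * (1/q₂ - 1) = 2*(n : ℝ) - 2 ∧
      2*((1 - 2*q₁) + (1 - 2*q₂)) = 2*(2*(n : ℝ) - 4)/(n : ℝ) := by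
  rintro ⟨a, b, ha, hb, h1, h2⟩
  have hn' : (3 : ℝ) < n := by exact_mod_cast hn
  have hn0 : (n : ℝ) ≠ 0 := by positivity
  have hsum : (n : ℝ) * (a + b) = 2 := by
    field_simp at h2
    linarith
  have hmul : (1 - a) * (1 - b) = (2 * (n : ℝ) - 2) * (a * b) := by
    rw [← h1]
    field_simp
  have hprod : (n : ℝ) * (2 * n - 3) * (a * b) = n - 2 := by
    linear_combination (-(n : ℝ)) * hmul - hsum
  -- `n² (2n - 3) (a - b)² = -4 (n - 1) (n - 3)`: the discriminant would be negative.
  have hdisc : (n : ℝ) ^ 2 * (2 * n - 3) * (a - b) ^ 2 = -4 * ((n - 1) * (n - 3)) := by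
    linear_combination (2 * (n : ℝ) - 3) * (n * (a + b) + 2) * hsum - 4 * (n : ℝ) * hprod
  have hpos : 0 < ((n : ℝ) - 1) * (n - 3) := mul_pos (by linarith) (by linarith)
  have hnonneg : 0 ≤ (n : ℝ) ^ 2 * (2 * n - 3) * (a - b) ^ 2 :=
    mul_nonneg (mul_nonneg (sq_nonneg _) (by linarith)) (sq_nonneg _)
  linarith
end

section
/- The only pair of rational numbers (q₁, q₂) with each qᵢ in the interval (0, 1/2] satisfying (1/q₁ − 1)·(1/q₂ − 1) = 4 and 2·((1 − 2q₁) + (1 − 2q₂)) = 4/3 is q₁ = q₂ = 1/3. -/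
/-- The only pair of rationals `(q₁, q₂)` with each `qᵢ ∈ (0, 1/2]` satisfying
`(1/q₁ − 1)(1/q₂ − 1) = 4` and `2((1 − 2q₁) + (1 − 2q₂)) = 4/3` is `q₁ = q₂ = 1/3`. -/
theorem stmt4 (q₁ q₂ : ℚ) :
    ((0 < q₁ ∧ q₁ ≤ 1/2) ∧ (0 < q₂ ∧ q₂ ≤ 1/2) ∧
      (1/q₁ - 1) * (1/q₂ - 1) = 4 ∧
      2*((1 - 2*q₁) + (1 - 2*q₂)) = 4/3) ↔ (q₁ = 1/3 ∧ q₂ = 1/3) := by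
  constructor
  · rintro ⟨⟨h₁, -⟩, ⟨h₂, -⟩, hmul, hsum⟩
    have hq₂ : q₂ = 2/3 - q₁ := by linarith
    have hn₁ : q₁ ≠ 0 := h₁.ne'
    have hn₂ : q₂ ≠ 0 := h₂.ne'
    have hclear : (1 - q₁) * (1 - q₂) = 4 * (q₁ * q₂) := by
      field_simp at hmul
      linarith
    -- The sum is `2/3` and the product `1/9`, so `q₁` is a double root of `(t - 1/3)²`.
    have hsq : (q₁ - 1/3)^2 = 0 := by
      rw [hq₂] at hclear
      linarith
    have hq₁ : q₁ = 1/3 := sub_eq_zero.mp (pow_eq_zero_iff two_ne_zero |>.mp hsq)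
    exact ⟨hq₁, by linarith⟩
  · rintro ⟨rfl, rfl⟩
    norm_num
end

section
/- Let p, q, r, s be positive integers with r·q + s·p = p·q (equivalently r/p + s/q = 1), and let n = gcd(p, r). Then the set H = {(θ₁, θ₂) ∈ ℚ × ℚ : p·θ₁ ∈ ℤ, q·θ₂ ∈ ℤ, and r·θ₁ + s·θ₂ ∈ ℤ} is exactly the additive subgroup of ℚ × ℚ generated by (1/p, 1/q), (1/n, 0), (1, 0), and (0, 1). -/
/-!
Since `s/q = 1 - r/p`, the generator `(1/p, 1/q)` lies in `H`. Given `(θ₁, θ₂) ∈ H` with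
`q θ₂ = b`, subtracting `b • (1/p, 1/q)` leaves `(x, 0)` with `p x` and `r x` both integers.
By Bézout `gcd(p, r) x` is an integer, so `(x, 0)` is a multiple of `(1 / gcd(p, r), 0)`.
-/

/-- Bendall's theorem: for positive integers `p, q, r, s` with `rq + sp = pq` and
`n = gcd(p, r)`, the set `H = {(θ₁, θ₂) ∈ ℚ × ℚ : pθ₁ ∈ ℤ, qθ₂ ∈ ℤ, rθ₁ + sθ₂ ∈ ℤ}`
is the additive subgroup generated by `(1/p, 1/q)`, `(1/n, 0)`, `(1, 0)`, `(0, 1)`. -/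
theorem stmt6 (p q r s : ℕ) (hp : 0 < p) (hq : 0 < q) (hr : 0 < r) (hs : 0 < s)
    (hwt : r * q + s * p = p * q) :
    {θ : ℚ × ℚ | (∃ k : ℤ, (p : ℚ) * θ.1 = k) ∧ (∃ k : ℤ, (q : ℚ) * θ.2 = k) ∧
        (∃ k : ℤ, (r : ℚ) * θ.1 + (s : ℚ) * θ.2 = k)}
      = (AddSubgroup.closure
          {((1/(p : ℚ), 1/(q : ℚ)) : ℚ × ℚ), (1/((Nat.gcd p r : ℕ) : ℚ), 0), (1, 0), (0, 1)} :
          AddSubgroup (ℚ × ℚ)) := by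
  have hp' : (p : ℚ) ≠ 0 := by positivity
  have hq' : (q : ℚ) ≠ 0 := by positivity
  have hn : 0 < Nat.gcd p r := Nat.gcd_pos_of_pos_left _ hp
  have hn' : ((Nat.gcd p r : ℕ) : ℚ) ≠ 0 := by positivity
  have hw : (r : ℚ) * q + s * p = p * q := by exact_mod_cast hwt
  ext θ
  simp only [Set.mem_ofPred_eq, SetLike.mem_coe]
  constructor
  · obtain ⟨x, y⟩ := θ
    rintro ⟨⟨a, ha⟩, ⟨b, hb⟩, ⟨c, hc⟩⟩
    have hbez : ((Nat.gcd p r : ℕ) : ℚ) = p * Nat.gcdA p r + r * Nat.gcdB p r := by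
      exact_mod_cast Nat.gcd_eq_gcd_ab p r
    have hy : y = b / q := by field_simp; linarith
    have h1 : (p : ℚ) * (x - b / p) = ((a - b : ℤ) : ℚ) := by
      push_cast; field_simp; linarith
    -- `r (x - b/p) = (r x + s y) - b (r/p + s/q)`, and the weight condition gives `r/p + s/q = 1`.
    have h2 : (r : ℚ) * (x - b / p) = ((c - b : ℤ) : ℚ) := by
      have hsum : (r : ℚ) / p + s / q = 1 := by field_simp; linarith
      push_cast
      rw [← hc, hy]
      linear_combination (-(b : ℚ)) * hsum
    have h3 : x = b / p
        + ((a - b) * Nat.gcdA p r + (c - b) * Nat.gcdB p r : ℤ) / ((Nat.gcd p r : ℕ) : ℚ) := by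
      rw [← sub_eq_iff_eq_add', eq_div_iff hn', hbez]
      push_cast at h1 h2 ⊢
      linear_combination (Nat.gcdA p r : ℚ) * h1 + (Nat.gcdB p r : ℚ) * h2
    have key : ((x, y) : ℚ × ℚ) = b • ((1/(p : ℚ), 1/(q : ℚ)) : ℚ × ℚ)
        + ((a - b) * Nat.gcdA p r + (c - b) * Nat.gcdB p r : ℤ)
          • ((1/((Nat.gcd p r : ℕ) : ℚ), 0) : ℚ × ℚ) := by
      refine Prod.ext ?_ ?_
      · simpa [div_eq_mul_inv] using h3
      · simpa [div_eq_mul_inv] using hy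
    rw [key]
    exact add_mem (zsmul_mem (AddSubgroup.subset_closure (by simp)) _)
      (zsmul_mem (AddSubgroup.subset_closure (by simp)) _)
  · intro h
    induction h using AddSubgroup.closure_induction with
    | mem z hz =>
      simp only [Set.mem_insert_iff, Set.mem_singleton_iff] at hz
      rcases hz with rfl | rfl | rfl | rfl
      · refine ⟨⟨1, ?_⟩, ⟨1, ?_⟩, ⟨1, ?_⟩⟩ <;> push_cast <;> field_simp
        linarith
      · obtain ⟨u, hu⟩ := Nat.gcd_dvd_left p r
        obtain ⟨v, hv⟩ := Nat.gcd_dvd_right p r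
        have hu' : (p : ℚ) = (Nat.gcd p r : ℕ) * u := by exact_mod_cast hu
        have hv' : (r : ℚ) = (Nat.gcd p r : ℕ) * v := by exact_mod_cast hv
        refine ⟨⟨u, ?_⟩, ⟨0, by simp⟩, ⟨v, ?_⟩⟩
        · rw [mul_one_div, div_eq_iff hn']
          push_cast; linarith
        · rw [mul_zero, add_zero, mul_one_div, div_eq_iff hn']
          push_cast; linarith
      · exact ⟨⟨p, by simp⟩, ⟨0, by simp⟩, ⟨r, by simp⟩⟩
      · exact ⟨⟨0, by simp⟩, ⟨q, by simp⟩, ⟨s, by simp⟩⟩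
    | zero => exact ⟨⟨0, by simp⟩, ⟨0, by simp⟩, ⟨0, by simp⟩⟩
    | add z w _ _ hz hw =>
      obtain ⟨⟨a, ha⟩, ⟨b, hb⟩, ⟨c, hc⟩⟩ := hz
      obtain ⟨⟨a', ha'⟩, ⟨b', hb'⟩, ⟨c', hc'⟩⟩ := hw
      refine ⟨⟨a + a', ?_⟩, ⟨b + b', ?_⟩, ⟨c + c', ?_⟩⟩ <;>
        simp only [Prod.fst_add, Prod.snd_add] <;> push_cast <;> linarith
    | neg z _ hz =>
      obtain ⟨⟨a, ha⟩, ⟨b, hb⟩, ⟨c, hc⟩⟩ := hz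
      refine ⟨⟨-a, ?_⟩, ⟨-b, ?_⟩, ⟨-c, ?_⟩⟩ <;>
        simp only [Prod.fst_neg, Prod.snd_neg] <;> push_cast <;> linarith
end

section
/- Let p, q, r, s be positive integers with r·q + s·p = p·q (equivalently r/p + s/q = 1), and let m = gcd(q, s). Then the set H = {(θ₁, θ₂) ∈ ℚ × ℚ : p·θ₁ ∈ ℤ, q·θ₂ ∈ ℤ, and r·θ₁ + s·θ₂ ∈ ℤ} is exactly the additive subgroup of ℚ × ℚ generated by (1/p, 1/q), (0, 1/m), (1, 0), and (0, 1). -/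
/-!
The weight relation reads `r/p + s/q = 1`, so `(1/p, 1/q)` satisfies the three integrality
conditions, as do the other generators; these conditions are additive. Conversely, if
`p * θ₁ = a` with `a` an integer, then `θ - a • (1/p, 1/q) = (0, t)` where `q * t` and `s * t` are
both integers, so by Bézout `gcd(q, s) * t` is an integer `c`, whence
`θ = a • (1/p, 1/q) + c • (0, 1/gcd(q, s))`.
-/

/-- Alternative form of Bendall's theorem: for positive integers `p, q, r, s` with
`rq + sp = pq` and `m = gcd(q, s)`, the set
`H = {(θ₁, θ₂) ∈ ℚ × ℚ : pθ₁ ∈ ℤ, qθ₂ ∈ ℤ, rθ₁ + sθ₂ ∈ ℤ}`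
is the additive subgroup generated by `(1/p, 1/q)`, `(0, 1/m)`, `(1, 0)`, `(0, 1)`. -/
theorem stmt7 (p q r s : ℕ) (hp : 0 < p) (hq : 0 < q) (hr : 0 < r) (hs : 0 < s)
    (hwt : r * q + s * p = p * q) :
    {θ : ℚ × ℚ | (∃ k : ℤ, (p : ℚ) * θ.1 = k) ∧ (∃ k : ℤ, (q : ℚ) * θ.2 = k) ∧
        (∃ k : ℤ, (r : ℚ) * θ.1 + (s : ℚ) * θ.2 = k)}
      = (AddSubgroup.closure
          {((1/(p : ℚ), 1/(q : ℚ)) : ℚ × ℚ), (0, 1/((Nat.gcd q s : ℕ) : ℚ)), (1, 0), (0, 1)} :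
          AddSubgroup (ℚ × ℚ)) := by
  have hp' : (p : ℚ) ≠ 0 := by positivity
  have hq' : (q : ℚ) ≠ 0 := by positivity
  have hm' : ((Nat.gcd q s : ℕ) : ℚ) ≠ 0 := by
    exact_mod_cast (Nat.gcd_pos_of_pos_left s hq).ne'
  have hw : (r : ℚ) * q + s * p = p * q := by exact_mod_cast hwt
  ext θ
  simp only [Set.mem_ofPred_eq, SetLike.mem_coe]
  constructor
  · obtain ⟨x, y⟩ := θ
    rintro ⟨⟨a, ha⟩, ⟨b, hb⟩, ⟨d, hd⟩⟩
    dsimp only at ha hb hd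
    have hbez : ((Nat.gcd q s : ℕ) : ℚ) = q * (Nat.gcdA q s : ℤ) + s * (Nat.gcdB q s : ℤ) := by
      exact_mod_cast Nat.gcd_eq_gcd_ab q s
    have hx : x = a / p := by field_simp; linarith
    have hst : (s : ℚ) * (y - a / q) = d - a := by
      rw [← hd, hx]
      field_simp
      linear_combination (-a : ℚ) * hw
    have hqt : (q : ℚ) * (y - a / q) = b - a := by
      rw [← hb]
      field_simp
    -- The integer `gcd(q, s) * t`, where `t = y - a / q`, `q * t = b - a` and `s * t = d - a`.
    let c : ℤ := (b - a) * Nat.gcdA q s + (d - a) * Nat.gcdB q s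
    have hc : ((Nat.gcd q s : ℕ) : ℚ) * (y - a / q) = c := by
      simp only [c]
      push_cast
      rw [hbez]
      linear_combination (Nat.gcdA q s : ℚ) * hqt + (Nat.gcdB q s : ℚ) * hst
    have hy : y = a / q + c / (Nat.gcd q s : ℕ) := by
      rw [← hc, mul_div_cancel_left₀ _ hm']
      ring
    have key : ((x, y) : ℚ × ℚ) = a • ((1/(p : ℚ), 1/(q : ℚ)) : ℚ × ℚ)
        + c • ((0, 1/((Nat.gcd q s : ℕ) : ℚ)) : ℚ × ℚ) := by
      ext
      · simp [hx, div_eq_mul_inv]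
      · simp [hy, div_eq_mul_inv]
    rw [key]
    exact add_mem (zsmul_mem (AddSubgroup.subset_closure (by simp)) _)
      (zsmul_mem (AddSubgroup.subset_closure (by simp)) _)
  · intro h
    induction h using AddSubgroup.closure_induction with
    | mem z hz =>
      simp only [Set.mem_insert_iff, Set.mem_singleton_iff] at hz
      rcases hz with rfl | rfl | rfl | rfl
      · refine ⟨⟨1, by simp [hp']⟩, ⟨1, by simp [hq']⟩, ⟨1, ?_⟩⟩
        push_cast
        field_simp
        linarith
      · obtain ⟨u, hu⟩ := Nat.gcd_dvd_left q s
        obtain ⟨v, hv⟩ := Nat.gcd_dvd_right q s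
        have hu' : (q : ℚ) = (Nat.gcd q s : ℕ) * u := by exact_mod_cast hu
        have hv' : (s : ℚ) = (Nat.gcd q s : ℕ) * v := by exact_mod_cast hv
        refine ⟨⟨0, by simp⟩, ⟨u, ?_⟩, ⟨v, ?_⟩⟩
        · rw [mul_one_div, div_eq_iff hm']
          push_cast
          linarith
        · rw [mul_zero, zero_add, mul_one_div, div_eq_iff hm']
          push_cast
          linarith
      · exact ⟨⟨p, by simp⟩, ⟨0, by simp⟩, ⟨r, by simp⟩⟩
      · exact ⟨⟨0, by simp⟩, ⟨q, by simp⟩, ⟨s, by simp⟩⟩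
    | zero => exact ⟨⟨0, by simp⟩, ⟨0, by simp⟩, ⟨0, by simp⟩⟩
    | add z w _ _ hz hw =>
      obtain ⟨⟨a, ha⟩, ⟨b, hb⟩, ⟨d, hd⟩⟩ := hz
      obtain ⟨⟨a', ha'⟩, ⟨b', hb'⟩, ⟨d', hd'⟩⟩ := hw
      refine ⟨⟨a + a', ?_⟩, ⟨b + b', ?_⟩, ⟨d + d', ?_⟩⟩ <;>
        simp only [Prod.fst_add, Prod.snd_add] <;> push_cast <;> linarith
    | neg z _ hz =>
      obtain ⟨⟨a, ha⟩, ⟨b, hb⟩, ⟨d, hd⟩⟩ := hz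
      refine ⟨⟨-a, ?_⟩, ⟨-b, ?_⟩, ⟨-d, ?_⟩⟩ <;>
        simp only [Prod.fst_neg, Prod.snd_neg] <;> push_cast <;> linarith
end

section
/- For every natural number n with n ≥ 3, the set {(θ₁, θ₂) ∈ ℚ × ℚ : n·θ₁ ∈ ℤ, n·θ₂ ∈ ℤ, and (n−1)·θ₁ + θ₂ ∈ ℤ} is exactly the additive subgroup of ℚ × ℚ generated by (1/n, 1/n), (1, 0), and (0, 1). -/
/-!
If `n θ₁ = a` and `(n - 1) θ₁ + θ₂ = c` with `a, c` integers, then `θ₁ = a / n` and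
`θ₂ = θ₁ + (c - a)`, so `θ = a • (1/n, 1/n) + (c - a) • (0, 1)` lies in the subgroup.
Conversely the three integrality conditions are additive in `θ` and hold for each generator.
-/

/-- For `n ≥ 3`, the set `{(θ₁, θ₂) ∈ ℚ × ℚ : nθ₁ ∈ ℤ, nθ₂ ∈ ℤ, (n−1)θ₁ + θ₂ ∈ ℤ}`
is exactly the additive subgroup of `ℚ × ℚ` generated by `(1/n, 1/n)`, `(1, 0)`, `(0, 1)`. -/
theorem stmt8 (n : ℕ) (hn : n ≥ 3) :
    {θ : ℚ × ℚ | (∃ k : ℤ, (n : ℚ) * θ.1 = k) ∧ (∃ k : ℤ, (n : ℚ) * θ.2 = k) ∧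
        (∃ k : ℤ, ((n : ℚ) - 1) * θ.1 + θ.2 = k)}
      = (AddSubgroup.closure
          {((1/(n : ℚ), 1/(n : ℚ)) : ℚ × ℚ), (1, 0), (0, 1)} : AddSubgroup (ℚ × ℚ)) := by
  have hn0 : (n : ℚ) ≠ 0 := by
    have : n ≠ 0 := by omega
    exact_mod_cast this
  ext θ
  simp only [Set.mem_setOf_eq, SetLike.mem_coe]
  constructor
  · rintro ⟨⟨a, ha⟩, -, ⟨c, hc⟩⟩
    -- Subtracting `n θ₁ = a` from `(n - 1) θ₁ + θ₂ = c` gives `θ₂ = θ₁ + (c - a)`.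
    have h : θ = a • ((1/(n : ℚ), 1/(n : ℚ)) : ℚ × ℚ) + (c - a) • ((0, 1) : ℚ × ℚ) := by
      have h1 : θ.1 = a * (1 / (n : ℚ)) := by
        field_simp
        linarith
      have h2 : θ.2 = a * (1 / (n : ℚ)) + (c - a) := by
        rw [← h1]
        linarith
      ext
      · simpa using h1
      · simpa using h2
    rw [h]
    exact add_mem (zsmul_mem (AddSubgroup.subset_closure (by simp)) _)
      (zsmul_mem (AddSubgroup.subset_closure (by simp)) _)
  · intro h
    induction h using AddSubgroup.closure_induction with
    | mem x hx =>
      rcases hx with rfl | rfl | rfl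
      · refine ⟨⟨1, ?_⟩, ⟨1, ?_⟩, ⟨1, ?_⟩⟩ <;> push_cast <;> field_simp
        ring
      · exact ⟨⟨n, by simp⟩, ⟨0, by simp⟩, ⟨n - 1, by simp⟩⟩
      · exact ⟨⟨0, by simp⟩, ⟨n, by simp⟩, ⟨1, by simp⟩⟩
    | zero => exact ⟨⟨0, by simp⟩, ⟨0, by simp⟩, ⟨0, by simp⟩⟩
    | add x y _ _ hx hy =>
      obtain ⟨⟨a, ha⟩, ⟨b, hb⟩, ⟨c, hc⟩⟩ := hx
      obtain ⟨⟨a', ha'⟩, ⟨b', hb'⟩, ⟨c', hc'⟩⟩ := hy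
      refine ⟨⟨a + a', ?_⟩, ⟨b + b', ?_⟩, ⟨c + c', ?_⟩⟩ <;>
        simp only [Prod.fst_add, Prod.snd_add] <;> push_cast <;> linarith
    | neg x _ hx =>
      obtain ⟨⟨a, ha⟩, ⟨b, hb⟩, ⟨c, hc⟩⟩ := hx
      refine ⟨⟨-a, ?_⟩, ⟨-b, ?_⟩, ⟨-c, ?_⟩⟩ <;>
        simp only [Prod.fst_neg, Prod.snd_neg] <;> push_cast <;> linarith
end
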